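/- arXiv:2412.06123 — 2 statements merged into one kernel-verified Lean document; each statement's English description precedes it below -/
import Mathlib

section
/- Let F be a field and n ≥ 3. The set S = {B_n, A_nB_n} is a generating set of the bicirculant algebra C_n(F), and its length satisfies l(S) ≥ n − 1; in fact dim_F L_{n−2}(S) ≤ 2(n−2) + 1 < dim_F C_n(F). -/
/-!
Both generators `u = B` and `v = A B` are involutions, so a word of length at most `k` in
them reduces to an alternating word, and there are at most `2 k + 1` alternating words of length
at most `k` (`finrank_Lk_le`).  They generate the algebra because `v u = A`.

For the dimension of the whole algebra, consider the `2 n` matrices `A ^ s`, `A ^ s B` with `s < n`.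
If `∑ a_s A ^ s + ∑ b_s A ^ s B = 0` and `b_{n-1} = b_{n-2} = 0`, then rows `0` and `1` of this
relation give `a_j = - b_{n-1-j}` and `a_j = a_{j+2}`, so all coefficients vanish.
Hence the dimension is at least `2 n - 2 > 2 (n - 2) + 1` (`two_mul_le_finrank`).
Since the chain `L_k` stabilizes at the whole algebra, the length is attained, and it is at
least `n - 1` by comparing dimensions.
-/

/-- `Lk F S k` is the `F`-linear span of all products of at most `k` elements of `S`
(the empty product `1` has length `0`); equivalently `V ^ k` with `V = span F ({1} ∪ S)`. -/
noncomputable def Lk (F : Type*) [Field F] {A : Type*} [Ring A] [Algebra F A]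
    (S : Set A) (k : ℕ) : Submodule F A :=
  (Submodule.span F ({1} ∪ S)) ^ k

/-- The length of a generating set `S`: the least `k` with `Lk F S k = ⊤`. -/
noncomputable def lenS (F : Type*) [Field F] {A : Type*} [Ring A] [Algebra F A]
    (S : Set A) : ℕ :=
  sInf {k | Lk F S k = ⊤}

/-- `mAlg F A` is the maximal degree over all `τ ∈ A` of the minimal polynomial of `τ`. -/
noncomputable def mAlg (F A : Type*) [Field F] [Ring A] [Algebra F A] : ℕ :=
  sSup {d | ∃ τ : A, d = (minpoly F τ).natDegree}

/-- The circulant permutation matrix `A_n` (ones in positions `(i, i+1)` cyclically). -/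
def Acirc (n : ℕ) (F : Type*) [Field F] : Matrix (Fin n) (Fin n) F :=
  Matrix.of fun i j => if (j : ℕ) = ((i : ℕ) + 1) % n then 1 else 0

/-- The anti-circulant permutation matrix `B_n` (ones in positions `(i, n+1-i)`,
i.e. `i + j = n - 1` in 0-indexed coordinates). -/
def Bcirc (n : ℕ) (F : Type*) [Field F] : Matrix (Fin n) (Fin n) F :=
  Matrix.of fun i j => if (i : ℕ) + (j : ℕ) = n - 1 then 1 else 0

/-! ### Words in two involutions -/

/-- The alternating word `x y x y ⋯` with `k` letters. -/
def altWord {A : Type*} [Monoid A] : A → A → ℕ → A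
  | _, _, 0 => 1
  | x, y, k + 1 => x * altWord y x k

/-- The alternating words in `u`, `v` of length at most `k`; the empty word is listed separately so
that the count is visibly at most `2 k + 1`. -/
noncomputable def altSet {A : Type*} [Monoid A] (u v : A) (k : ℕ) : Finset A :=
  open Classical in
  insert 1 ((Finset.range k).image (fun i => altWord u v (i + 1)) ∪
    (Finset.range k).image (fun i => altWord v u (i + 1)))

lemma card_altSet_le {A : Type*} [Monoid A] (u v : A) (k : ℕ) :
    (altSet u v k).card ≤ 2 * k + 1 := by
  classical
  unfold altSet
  refine (Finset.card_insert_le _ _).trans ?_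
  have h1 := Finset.card_union_le ((Finset.range k).image (fun i => altWord u v (i + 1)))
    ((Finset.range k).image (fun i => altWord v u (i + 1)))
  have h2 := Finset.card_image_le (s := Finset.range k) (f := fun i => altWord u v (i + 1))
  have h3 := Finset.card_image_le (s := Finset.range k) (f := fun i => altWord v u (i + 1))
  rw [Finset.card_range] at h2 h3
  omega

lemma mem_altSet {A : Type*} [Monoid A] (u v : A) (k : ℕ) (x : A) :
    x ∈ altSet u v k ↔ ∃ i ≤ k, x = altWord u v i ∨ x = altWord v u i := by
  classical
  simp only [altSet, Finset.mem_insert, Finset.mem_union, Finset.mem_image, Finset.mem_range]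
  constructor
  · rintro (rfl | ⟨i, hi, rfl⟩ | ⟨i, hi, rfl⟩)
    · exact ⟨0, Nat.zero_le _, Or.inl rfl⟩
    · exact ⟨i + 1, hi, Or.inl rfl⟩
    · exact ⟨i + 1, hi, Or.inr rfl⟩
  · rintro ⟨i, hi, h⟩
    cases i with
    | zero => left; rcases h with h | h <;> exact h
    | succ i =>
      right
      rcases h with h | h
      · exact Or.inl ⟨i, hi, h.symm⟩
      · exact Or.inr ⟨i, hi, h.symm⟩

lemma mul_altWord {A : Type*} [Monoid A] {u v : A} (hu : u * u = 1) {k i : ℕ} (hi : i ≤ k) :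
    (∃ j ≤ k + 1, u * altWord u v i = altWord u v j ∨ u * altWord u v i = altWord v u j) ∧
    (∃ j ≤ k + 1, u * altWord v u i = altWord u v j ∨ u * altWord v u i = altWord v u j) := by
  refine ⟨?_, i + 1, by omega, Or.inl rfl⟩
  cases i with
  | zero => exact ⟨1, by omega, Or.inl rfl⟩
  | succ i =>
    refine ⟨i, by omega, Or.inr ?_⟩
    rw [altWord, ← mul_assoc, hu, one_mul]

lemma Lk_le_span_altSet (F : Type*) [Field F] {A : Type*} [Ring A] [Algebra F A] {u v : A}
    (hu : u * u = 1) (hv : v * v = 1) (k : ℕ) :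
    Lk F {u, v} k ≤ Submodule.span F (altSet u v k : Set A) := by
  induction k with
  | zero =>
    rw [Lk, pow_zero, Submodule.one_eq_span]
    refine Submodule.span_mono ?_
    rintro x rfl
    exact (mem_altSet _ _ _ _).2 ⟨0, le_rfl, Or.inl rfl⟩
  | succ k ih =>
    have h : Lk F {u, v} (k + 1) = Submodule.span F ({1} ∪ {u, v}) * Lk F {u, v} k := by
      rw [Lk, Lk, pow_succ']
    rw [h]
    refine (mul_le_mul_right ih _).trans ?_
    rw [Submodule.span_mul_span]
    refine Submodule.span_mono ?_
    rintro _ ⟨x, hx, w, hw, rfl⟩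
    obtain ⟨i, hi, hw⟩ := (mem_altSet _ _ _ _).1 hw
    refine (mem_altSet _ _ _ _).2 ?_
    simp only [Set.mem_union, Set.mem_singleton_iff, Set.mem_insert_iff] at hx
    rcases hx with rfl | rfl | rfl
    · exact ⟨i, by omega, by simpa using hw⟩
    · obtain ⟨h1, h2⟩ := mul_altWord (v := v) hu hi
      rcases hw with rfl | rfl
      · exact h1
      · exact h2
    · obtain ⟨⟨j, hj, h1⟩, ⟨j', hj', h2⟩⟩ := mul_altWord (v := u) hv hi
      rcases hw with rfl | rfl
      · exact ⟨j', hj', h2.symm⟩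
      · exact ⟨j, hj, h1.symm⟩

lemma finrank_Lk_le (F : Type*) [Field F] {A : Type*} [Ring A] [Algebra F A] {u v : A}
    (hu : u * u = 1) (hv : v * v = 1) (k : ℕ) :
    Module.finrank F (Lk F {u, v} k) ≤ 2 * k + 1 :=
  (Submodule.finrank_mono (Lk_le_span_altSet F hu hv k)).trans
    ((finrank_span_finset_le_card _).trans (card_altSet_le u v k))

/-! ### The chain `L_k` -/

lemma Lk_mono (F : Type*) [Field F] {A : Type*} [Ring A] [Algebra F A] (S : Set A) :
    Monotone (Lk F S) := by
  intro i j hij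
  refine pow_le_pow_right' ?_ hij
  rw [Submodule.one_eq_span]
  exact Submodule.span_mono Set.subset_union_left

/-- In a finite-dimensional algebra the chain `L_k` of a generating set reaches the whole algebra:
its stable value is a subalgebra containing the generators. -/
lemma exists_Lk_eq_top (F : Type*) [Field F] {A : Type*} [Ring A] [Algebra F A]
    [FiniteDimensional F A] (S : Set A) (hS : Algebra.adjoin F S = ⊤) : ∃ k, Lk F S k = ⊤ := by
  obtain ⟨N, hN⟩ := monotone_stabilizes_iff_noetherian.2 (inferInstance : IsNoetherian F A)
    ⟨Lk F S, Lk_mono F S⟩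
  replace hN : ∀ m, N ≤ m → Lk F S N = Lk F S m := hN
  have hone : (1 : A) ∈ Lk F S N := by
    have h0 : (1 : A) ∈ Lk F S 0 := by
      rw [Lk, pow_zero]; exact Submodule.one_le.1 le_rfl
    exact Lk_mono F S (Nat.zero_le N) h0
  have hmul : ∀ x y, x ∈ Lk F S N → y ∈ Lk F S N → x * y ∈ Lk F S N := by
    intro x y hx hy
    rw [hN (N + N) (by omega), Lk, pow_add]
    exact Submodule.mul_mem_mul hx hy
  refine ⟨N, ?_⟩
  have hle : Algebra.adjoin F S ≤ (Lk F S N).toSubalgebra hone hmul := by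
    refine Algebra.adjoin_le fun x hx => ?_
    change x ∈ Lk F S N
    rw [hN (N + 1) (by omega)]
    refine Lk_mono F S (by omega : 1 ≤ N + 1) ?_
    rw [Lk, pow_one]
    exact Submodule.subset_span (Or.inr hx)
  rw [hS] at hle
  exact eq_top_iff.2 fun x _ => hle (Algebra.mem_top (x := x))

/-! ### Matrices of self-maps -/

/-- The 0-1 matrix of a self-map `f`, with a one in each position `(i, f i)`. -/
def mapMat {n : ℕ} (F : Type*) [Field F] (f : Fin n → Fin n) : Matrix (Fin n) (Fin n) F :=
  Matrix.of fun i j => if j = f i then 1 else 0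

lemma mapMat_mul {n : ℕ} (F : Type*) [Field F] (f g : Fin n → Fin n) :
    mapMat F f * mapMat F g = mapMat F (g ∘ f) := by
  ext i j
  simp only [mapMat, Matrix.mul_apply, Matrix.of_apply, ite_mul, one_mul, zero_mul,
    Finset.sum_ite_eq', Finset.mem_univ, if_true, Function.comp]

lemma mapMat_id {n : ℕ} (F : Type*) [Field F] : mapMat F (id : Fin n → Fin n) = 1 := by
  ext i j
  simp [mapMat, Matrix.one_apply, eq_comm]

/-- The cyclic shift `i ↦ i + s mod n`. -/
def shiftMap (n s : ℕ) (i : Fin n) : Fin n :=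
  ⟨(i + s) % n, Nat.mod_lt _ (i.pos)⟩

lemma Bcirc_eq (n : ℕ) (F : Type*) [Field F] : Bcirc n F = mapMat F Fin.rev := by
  ext i j
  simp only [Bcirc, mapMat, Matrix.of_apply, Fin.ext_iff, Fin.val_rev]
  congr 1
  apply propext
  omega

lemma Acirc_eq (n : ℕ) (F : Type*) [Field F] : Acirc n F = mapMat F (shiftMap n 1) := by
  ext i j
  simp [Acirc, mapMat, shiftMap, Fin.ext_iff]

lemma Acirc_pow (n : ℕ) (F : Type*) [Field F] (s : ℕ) :
    Acirc n F ^ s = mapMat F (shiftMap n s) := by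
  induction s with
  | zero =>
    rw [pow_zero, ← mapMat_id]
    congr 1
    funext i
    simp [shiftMap, Nat.mod_eq_of_lt i.2]
  | succ s ih =>
    rw [pow_succ, ih, Acirc_eq, mapMat_mul]
    congr 1
    funext i
    simp [shiftMap, add_assoc]

lemma Bcirc_sq (n : ℕ) (F : Type*) [Field F] : Bcirc n F * Bcirc n F = 1 := by
  rw [Bcirc_eq, mapMat_mul, ← mapMat_id]
  congr 1
  funext i
  simp

lemma AB_sq (n : ℕ) (F : Type*) [Field F] :
    (Acirc n F * Bcirc n F) * (Acirc n F * Bcirc n F) = 1 := by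
  rw [Bcirc_eq, Acirc_eq, mapMat_mul, mapMat_mul, ← mapMat_id]
  congr 1
  funext i
  have hi := i.2
  simp only [Function.comp, shiftMap, Fin.ext_iff, Fin.val_rev, id]
  rcases Nat.lt_or_ge (i.1 + 1) n with h | h
  · rw [Nat.mod_eq_of_lt h, Nat.mod_eq_of_lt (by omega)]
    omega
  · have h' : i.1 + 1 = n := by omega
    rw [h', Nat.mod_self, show n - (0 + 1) + 1 = n by omega, Nat.mod_self]
    omega

/-! ### The dimension of the bicirculant algebra -/

/-- If the last two coefficients of the `A ^ s B` vanish, a relation between the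
`A ^ s` and `A ^ s B` is trivial; rows `0` and `1` of the relation suffice. -/
lemma coeff_eq_zero (n : ℕ) (hn : 3 ≤ n) (F : Type*) [Field F] (a b : Fin n → F)
    (h : ∑ s, a s • Acirc n F ^ (s : ℕ) + ∑ s, b s • (Acirc n F ^ (s : ℕ) * Bcirc n F) = 0)
    (h1 : b ⟨n - 1, by omega⟩ = 0) (h2 : b ⟨n - 2, by omega⟩ = 0) : a = 0 ∧ b = 0 := by
  have key : ∀ (i j : Fin n) (s t : Fin n), shiftMap n s i = j → shiftMap n t i = j.rev →
      a s + b t = 0 := by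
    intro i j s t hs ht
    -- a cyclic shift of a fixed index determines the amount of the shift
    have inj : ∀ s t : Fin n, shiftMap n s i = shiftMap n t i → s = t := by
      intro s t hst
      have h3 : i.1 + s.1 ≡ i.1 + t.1 [MOD n] := Fin.ext_iff.1 hst
      exact Fin.ext (Nat.ModEq.eq_of_lt_of_lt (Nat.ModEq.add_left_cancel' _ h3) s.2 t.2)
    simp only [Acirc_pow, Bcirc_eq, mapMat_mul] at h
    have hij := congrFun (congrFun h i) j
    simp only [Matrix.add_apply, Matrix.sum_apply,
      Matrix.smul_apply, Matrix.zero_apply, mapMat, Matrix.of_apply, smul_eq_mul,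
      Function.comp] at hij
    rw [Finset.sum_eq_single s, Finset.sum_eq_single t] at hij
    · simpa [hs, ht] using hij
    · intro t' _ hne
      rw [if_neg, mul_zero]
      intro hj
      exact hne (inj _ _ (by rw [ht, hj, Fin.rev_rev]))
    · simp
    · intro s' _ hne
      rw [if_neg, mul_zero]
      intro hj
      exact hne (inj _ _ (by rw [hs, hj]))
    · simp
  have row0 : ∀ j (hj : j < n), a ⟨j, hj⟩ + b ⟨n - 1 - j, by omega⟩ = 0 := by
    intro j hj
    refine key ⟨0, by omega⟩ ⟨j, hj⟩ _ _ ?_ ?_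
    · simp [shiftMap, Nat.mod_eq_of_lt hj]
    · have : n - 1 - j < n := by omega
      simp only [shiftMap, Fin.ext_iff, Fin.val_rev, zero_add, Nat.mod_eq_of_lt this]
      omega
  have row1 : ∀ j (hj : j + 2 < n), a ⟨j, by omega⟩ + b ⟨n - 1 - (j + 2), by omega⟩ = 0 := by
    intro j hj
    refine key ⟨1, by omega⟩ ⟨j + 1, by omega⟩ _ _ ?_ ?_
    · have : 1 + j < n := by omega
      simp only [shiftMap, Fin.ext_iff, Nat.mod_eq_of_lt this]
      omega
    · have : 1 + (n - 1 - (j + 2)) < n := by omega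
      simp only [shiftMap, Fin.ext_iff, Fin.val_rev, Nat.mod_eq_of_lt this]
      omega
  have ha : ∀ j (hj : j < n), a ⟨j, hj⟩ = 0 := by
    intro j
    induction j using Nat.strong_induction_on with
    | _ j ih =>
      intro hj
      match j, ih, hj with
      | 0, _, hj => simpa [h1] using row0 0 hj
      | 1, _, hj =>
        have h3 := row0 1 hj
        have h4 : b ⟨n - 1 - 1, by omega⟩ = 0 := h2
        simpa [h4] using h3
      | j + 2, ih, hj =>
        have h3 := row0 (j + 2) hj
        have h4 := row1 j hj
        rw [ih j (by omega) (by omega), zero_add] at h4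
        rwa [h4, add_zero] at h3
  refine ⟨funext fun j => ha j j.2, funext fun j => ?_⟩
  have h3 := row0 (n - 1 - j) (by omega)
  rw [ha, zero_add] at h3
  have h4 : (⟨n - 1 - (n - 1 - j), by omega⟩ : Fin n) = j := Fin.ext (by simp only []; omega)
  rw [h4] at h3
  exact h3

lemma two_mul_le_finrank (n : ℕ) (hn : 3 ≤ n) (F : Type*) [Field F] :
    2 * n ≤ Module.finrank F
      ↥(Algebra.adjoin F ({Acirc n F, Bcirc n F} : Set (Matrix (Fin n) (Fin n) F))) + 2 := by
  set C := Algebra.adjoin F ({Acirc n F, Bcirc n F} : Set (Matrix (Fin n) (Fin n) F)) with hC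
  let x : C := ⟨Acirc n F, Algebra.subset_adjoin (by simp)⟩
  let y : C := ⟨Bcirc n F, Algebra.subset_adjoin (by simp)⟩
  -- recording two coefficients next to the linear combination makes the map injective
  let f : (Fin n → F) × (Fin n → F) →ₗ[F] C × (F × F) :=
    { toFun := fun p => (∑ s, p.1 s • x ^ (s : ℕ) + ∑ s, p.2 s • (x ^ (s : ℕ) * y),
        (p.2 ⟨n - 1, by omega⟩, p.2 ⟨n - 2, by omega⟩))
      map_add' := by
        intro p q
        simp only [Prod.fst_add, Prod.snd_add, Pi.add_apply, add_smul, Finset.sum_add_distrib,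
          Prod.mk_add_mk]
        congr 1
        abel
      map_smul' := by
        intro c p
        simp [Finset.smul_sum, smul_smul] }
  have hf : Function.Injective f := by
    rw [← LinearMap.ker_eq_bot, LinearMap.ker_eq_bot']
    rintro ⟨a, b⟩ hab
    obtain ⟨h0, h1, h2⟩ : (∑ s, a s • x ^ (s : ℕ) + ∑ s, b s • (x ^ (s : ℕ) * y) = 0) ∧
        b ⟨n - 1, by omega⟩ = 0 ∧ b ⟨n - 2, by omega⟩ = 0 := by
      simpa [f, Prod.ext_iff] using hab
    have h0' := congrArg (C.val) h0
    simp only [map_add, map_sum, map_smul, map_mul, map_pow, map_zero] at h0'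
    obtain ⟨rfl, rfl⟩ := coeff_eq_zero n hn F a b h0' h1 h2
    rfl
  have h := LinearMap.finrank_le_finrank_of_injective hf
  simp only [Module.finrank_prod, Module.finrank_fin_fun, Module.finrank_self] at h
  omega

theorem stmt_7 (F : Type*) [Field F] (n : ℕ) (hn : 3 ≤ n) :
    ∃ u v : ↥(Algebra.adjoin F ({Acirc n F, Bcirc n F} : Set (Matrix (Fin n) (Fin n) F))),
      (u : Matrix (Fin n) (Fin n) F) = Bcirc n F ∧
      (v : Matrix (Fin n) (Fin n) F) = Acirc n F * Bcirc n F ∧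
      Algebra.adjoin F {u, v} = ⊤ ∧
      n - 1 ≤ lenS F {u, v} ∧
      Module.finrank F (Lk F {u, v} (n - 2)) ≤ 2 * (n - 2) + 1 ∧
      2 * (n - 2) + 1 <
        Module.finrank F
          ↥(Algebra.adjoin F ({Acirc n F, Bcirc n F} : Set (Matrix (Fin n) (Fin n) F))) := by
  have hA : Acirc n F ∈
      Algebra.adjoin F ({Acirc n F, Bcirc n F} : Set (Matrix (Fin n) (Fin n) F)) :=
    Algebra.subset_adjoin (by simp)
  have hB : Bcirc n F ∈
      Algebra.adjoin F ({Acirc n F, Bcirc n F} : Set (Matrix (Fin n) (Fin n) F)) :=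
    Algebra.subset_adjoin (by simp)
  have hdim := two_mul_le_finrank n hn F
  refine ⟨⟨_, hB⟩, ⟨_, mul_mem hA hB⟩, rfl, rfl, ?_⟩
  generalize hu : (⟨_, hB⟩ : ↥(Algebra.adjoin F
    ({Acirc n F, Bcirc n F} : Set (Matrix (Fin n) (Fin n) F)))) = u
  generalize hv : (⟨_, mul_mem hA hB⟩ : ↥(Algebra.adjoin F
    ({Acirc n F, Bcirc n F} : Set (Matrix (Fin n) (Fin n) F)))) = v
  have huu : u * u = 1 := by
    subst hu; exact Subtype.ext (Bcirc_sq n F)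
  have hvv : v * v = 1 := by
    subst hv; exact Subtype.ext (AB_sq n F)
  have htop : Algebra.adjoin F {u, v} = ⊤ := by
    rw [eq_top_iff, ← Algebra.adjoin_adjoin_coe_preimage]
    refine Algebra.adjoin_le fun x hx => ?_
    have hu' : u ∈ Algebra.adjoin F {u, v} := Algebra.subset_adjoin (by simp)
    have hv' : v ∈ Algebra.adjoin F {u, v} := Algebra.subset_adjoin (by simp)
    rcases hx with hx | hx
    · have : x = v * u := by
        subst hu hv
        refine Subtype.ext (hx.trans ?_)
        change _ = Acirc n F * Bcirc n F * Bcirc n F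
        rw [mul_assoc, Bcirc_sq, mul_one]
      rw [this]
      exact mul_mem hv' hu'
    · have : x = u := by
        subst hu
        exact Subtype.ext hx
      rw [this]
      exact hu'
  have hL := finrank_Lk_le F huu hvv (n - 2)
  refine ⟨htop, ?_, hL, by omega⟩
  have hmem : Lk F {u, v} (lenS F {u, v}) = ⊤ := Nat.sInf_mem (exists_Lk_eq_top F {u, v} htop)
  by_contra hlt
  have hle := Lk_mono F {u, v} (by omega : lenS F {u, v} ≤ n - 2)
  rw [hmem, top_le_iff] at hle
  rw [hle, finrank_top] at hL
  omega
end

section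
/- Let F be an arbitrary field and n ≥ 3 odd. Then the length of the group algebra F D_n of the dihedral group of order 2n equals n; precisely, every generating set S of F D_n satisfies l(S) ≤ n, and there exists a generating set with l(S) = n. -/
/-! ### Powers of a subspace containing the unit -/

section Chain

variable {F A : Type*} [Field F] [Ring A] [Algebra F A] {V : Submodule F A}

lemma pow_mono_of_one_mem (h1 : (1 : A) ∈ V) {i j : ℕ} (h : i ≤ j) : V ^ i ≤ V ^ j :=
  pow_le_pow_right₀ (Submodule.one_le.2 h1) h

lemma mul_mem_pow_succ {k : ℕ} {x v : A} (hx : x ∈ V ^ k) (hv : v ∈ V) : x * v ∈ V ^ (k + 1) := by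
  rw [pow_succ]; exact Submodule.mul_mem_mul hx hv

lemma mul_mem_pow_succ' {k : ℕ} {x v : A} (hx : x ∈ V ^ k) (hv : v ∈ V) : v * x ∈ V ^ (k + 1) := by
  rw [pow_succ']; exact Submodule.mul_mem_mul hv hx

/-- If the chain of powers is stationary at `k`, it has already reached the generated algebra. -/
lemma pow_eq_top_of_stationary {S : Set A} (hS : Algebra.adjoin F S = ⊤)
    (hSV : S ⊆ V) (h1 : (1 : A) ∈ V) {k : ℕ} (hk : V ^ (k + 1) ≤ V ^ k) : V ^ k = ⊤ := by
  have hle : ∀ j, V ^ j ≤ V ^ k := by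
    intro j
    induction j with
    | zero => exact pow_mono_of_one_mem h1 (Nat.zero_le _)
    | succ j ih =>
      rw [pow_succ]
      exact (mul_le_mul' ih le_rfl).trans (by rwa [← pow_succ])
  have hex : ∀ x ∈ Algebra.adjoin F S, ∃ j, x ∈ V ^ j := by
    intro x hx
    induction hx using Algebra.adjoin_induction with
    | mem x hx => exact ⟨1, by simpa using hSV hx⟩
    | algebraMap r => exact ⟨0, by rw [pow_zero]; exact Submodule.algebraMap_mem r⟩
    | add x y _ _ hx hy =>
      obtain ⟨i, hi⟩ := hx
      obtain ⟨j, hj⟩ := hy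
      exact ⟨k, add_mem (hle i hi) (hle j hj)⟩
    | mul x y _ _ hx hy =>
      obtain ⟨i, hi⟩ := hx
      obtain ⟨j, hj⟩ := hy
      exact ⟨i + j, by rw [pow_add]; exact Submodule.mul_mem_mul hi hj⟩
  rw [eq_top_iff]
  intro x _
  obtain ⟨j, hj⟩ := hex x (by rw [hS]; trivial)
  exact hle j hj

/-- If `a * y ∉ W` for some
`y` in a product `P * Q`, then already `a * (p * q) ∉ W` for some `p ∈ P` and `q ∈ Q`. -/
lemma exists_mul_notMem {P Q W : Submodule F A} {a y : A} (hy : y ∈ P * Q) (ha : a * y ∉ W) :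
    ∃ p ∈ P, ∃ q ∈ Q, a * (p * q) ∉ W := by
  by_contra! H
  refine ha ?_
  induction hy using Submodule.mul_induction_on' with
  | mem_mul_mem p hp q hq => exact H p hp q hq
  | add x _ y _ hx hy =>
    rw [mul_add]
    exact add_mem (by by_contra h; exact h (hx h)) (by by_contra h; exact h (hy h))

/-- A monic relation of degree `m + 1` for `v ∈ V` puts `v ^ (m + 1)` in `V ^ m`. -/
lemma pow_mem_of_monic (h1 : (1 : A) ∈ V) {v : A} (hv : v ∈ V) {m : ℕ} {p : Polynomial F}
    (hp : p.Monic) (hdeg : p.natDegree = m + 1) (h0 : Polynomial.aeval v p = 0) :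
    v ^ (m + 1) ∈ V ^ m := by
  rw [Polynomial.aeval_eq_sum_range, hdeg, Finset.sum_range_succ, ← hdeg, hp.coeff_natDegree,
    hdeg, one_smul, add_comm, add_eq_zero_iff_eq_neg] at h0
  rw [h0]
  refine neg_mem (Submodule.sum_mem _ fun i hi => Submodule.smul_mem _ _ ?_)
  exact pow_mono_of_one_mem h1 (by simp at hi; omega) (Submodule.pow_mem_pow V hv i)

variable [FiniteDimensional F A]

lemma le_sup_span_of_finrank_le {P Q : Submodule F A} (hPQ : P ≤ Q)
    (hd : Module.finrank F Q ≤ Module.finrank F P + 1) {x : A} (hx : x ∈ Q) (hxP : x ∉ P) :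
    Q ≤ P ⊔ Submodule.span F {x} := by
  have hle : P ⊔ Submodule.span F {x} ≤ Q :=
    sup_le hPQ (by simpa [Submodule.span_le] using hx)
  have hlt : P < P ⊔ Submodule.span F {x} := by
    refine lt_of_le_of_ne le_sup_left fun h => hxP ?_
    rw [h]
    exact Submodule.mem_sup_right (Submodule.mem_span_singleton_self x)
  have := Submodule.finrank_lt_finrank_of_lt hlt
  exact (Submodule.eq_of_le_of_finrank_le hle (by omega)).ge

/-- If passing from `V ^ k` to `V ^ (k + 1)` adds at most one dimension and the chain has not
stabilised there, then some `v ∈ V` satisfies `v ^ (k + 2) ∉ V ^ (k + 1)`. Starting from a product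
`v * y ∉ V ^ (k + 1)`, the factors of `y` are traded for further copies of `v` one at a time, since
any two elements of `V ^ (k + 1)` outside `V ^ k` are proportional modulo `V ^ k`. -/
lemma exists_pow_notMem (h1 : (1 : A) ∈ V) {k : ℕ}
    (hd : Module.finrank F ↥(V ^ (k + 1)) ≤ Module.finrank F ↥(V ^ k) + 1)
    (hns : ¬ V ^ (k + 2) ≤ V ^ (k + 1)) : ∃ v ∈ V, v ^ (k + 2) ∉ V ^ (k + 1) := by
  obtain ⟨x, hx, hxn⟩ := SetLike.not_le_iff_exists.1 hns
  rw [pow_succ', ← one_mul x] at *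
  obtain ⟨v, hv, y, hy, hvy⟩ := exists_mul_notMem (a := (1 : A)) (by simpa using hx) hxn
  rw [← pow_succ'] at *
  simp only [one_mul] at hvy
  refine ⟨v, hv, ?_⟩
  have key : ∀ i m, i + m = k + 1 → ∃ y ∈ V ^ m, v ^ (i + 1) * y ∉ V ^ (k + 1) := by
    intro i
    induction i with
    | zero =>
      intro m hm
      obtain rfl : m = k + 1 := by omega
      exact ⟨y, hy, by simpa using hvy⟩
    | succ i ih =>
      intro m hm
      obtain ⟨y, hy, hyn⟩ := ih (m + 1) (by omega)
      rw [pow_succ] at hy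
      obtain ⟨p, hp, t, ht, hpt⟩ := exists_mul_notMem hy hyn
      refine ⟨p, hp, fun hcon => ?_⟩
      have hmemK : v ^ (i + 1) * p ∈ V ^ (k + 1) := by
        have : i + 1 + m = k + 1 := hm
        rw [← this, pow_add]
        exact Submodule.mul_mem_mul (Submodule.pow_mem_pow V hv _) hp
      have hnot : v ^ (i + 1) * p ∉ V ^ k := fun h => hpt (by
        rw [← mul_assoc]; exact mul_mem_pow_succ h ht)
      have hle := le_sup_span_of_finrank_le (pow_mono_of_one_mem h1 (Nat.le_succ k)) hd hmemK hnot
      have hw : v ^ i * (p * t) ∈ V ^ (k + 1) := by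
        have : i + (m + 1) = k + 1 := by omega
        rw [← this, pow_add]
        exact Submodule.mul_mem_mul (Submodule.pow_mem_pow V hv _) (mul_mem_pow_succ hp ht)
      obtain ⟨l, hl, w, hw, hlw⟩ := Submodule.mem_sup.1 (hle hw)
      obtain ⟨c, rfl⟩ := Submodule.mem_span_singleton.1 hw
      apply hpt
      have : v ^ (i + 1) * (p * t) = v * l + c • (v ^ (i + 1 + 1) * p) := by
        rw [pow_succ' v i, mul_assoc, ← hlw, mul_add, mul_smul_comm, ← mul_assoc, ← pow_succ']
      rw [this]
      exact add_mem (mul_mem_pow_succ' hl hv) (Submodule.smul_mem _ _ hcon)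
  obtain ⟨y, hy, hyn⟩ := key (k + 1) 0 (by omega)
  intro hcon
  rw [pow_zero] at hy
  obtain ⟨c, rfl⟩ := Submodule.mem_one.1 hy
  apply hyn
  rw [← Algebra.commutes, ← Algebra.smul_def]
  exact Submodule.smul_mem _ _ hcon

/-- After a step of dimension at most one which is not the end of the chain, all later steps are
obtained by adjoining the powers of one element. -/
lemma exists_power_driver (h1 : (1 : A) ∈ V) {k : ℕ}
    (hd : Module.finrank F ↥(V ^ (k + 1)) ≤ Module.finrank F ↥(V ^ k) + 1)
    (hns : ¬ V ^ (k + 2) ≤ V ^ (k + 1)) :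
    ∃ v ∈ V, ∀ j, k ≤ j → V ^ (j + 1) ≤ V ^ j ⊔ Submodule.span F {v ^ (j + 1)} := by
  obtain ⟨v, hv, hvn⟩ := exists_pow_notMem h1 hd hns
  refine ⟨v, hv, fun j hj => ?_⟩
  induction j, hj using Nat.le_induction with
  | base =>
    refine le_sup_span_of_finrank_le (pow_mono_of_one_mem h1 (Nat.le_succ k)) hd
      (Submodule.pow_mem_pow V hv _) fun h => hvn ?_
    rw [pow_succ v]
    exact mul_mem_pow_succ h hv
  | succ j _ ih =>
    rw [pow_succ' V (j + 1), Submodule.mul_le]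
    intro t ht y hy
    obtain ⟨l, hl, w, hw, rfl⟩ := Submodule.mem_sup.1 (ih hy)
    obtain ⟨c, rfl⟩ := Submodule.mem_span_singleton.1 hw
    -- `t * v ^ (j + 1) = (t * v ^ j) * v`, and the induction hypothesis applies to `t * v ^ j`.
    have htv : t * v ^ j ∈ V ^ (j + 1) := mul_mem_pow_succ' (Submodule.pow_mem_pow V hv _) ht
    obtain ⟨l', hl', w', hw', hlw⟩ := Submodule.mem_sup.1 (ih htv)
    obtain ⟨d, rfl⟩ := Submodule.mem_span_singleton.1 hw'
    have hmain : t * v ^ (j + 1) ∈ V ^ (j + 1) ⊔ Submodule.span F {v ^ (j + 1 + 1)} := by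
      rw [pow_succ v j, ← mul_assoc, ← hlw, add_mul, smul_mul_assoc, ← pow_succ]
      exact add_mem (Submodule.mem_sup_left (mul_mem_pow_succ hl' hv))
        (Submodule.mem_sup_right (Submodule.smul_mem _ _ (Submodule.mem_span_singleton_self _)))
    rw [mul_add, mul_smul_comm]
    exact add_mem (Submodule.mem_sup_left (mul_mem_pow_succ' hl ht))
      (Submodule.smul_mem _ _ hmain)

/-- An algebra of dimension at most `2n` all of whose elements are roots of monic polynomials of
degree `n + 1` is exhausted by products of at most `n` generators. -/
lemma pow_eq_top_of_bounds [Nontrivial A] {S : Set A} (hS : Algebra.adjoin F S = ⊤)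
    (hSV : S ⊆ V) (h1 : (1 : A) ∈ V) {n : ℕ} (hdim : Module.finrank F A ≤ 2 * n)
    (hpoly : ∀ x : A, ∃ p : Polynomial F, p.Monic ∧ p.natDegree = n + 1 ∧
      Polynomial.aeval x p = 0) : V ^ n = ⊤ := by
  by_contra hne
  have hns : ∀ k ≤ n, ¬ V ^ (k + 1) ≤ V ^ k := fun k hk h => hne (by
    rw [eq_top_iff, ← pow_eq_top_of_stationary hS hSV h1 h]
    exact pow_mono_of_one_mem h1 hk)
  by_cases hex : ∃ k < n, Module.finrank F ↥(V ^ (k + 1)) ≤ Module.finrank F ↥(V ^ k) + 1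
  · obtain ⟨k, hk, hd⟩ := hex
    obtain ⟨v, hv, hdrive⟩ := exists_power_driver h1 hd (hns (k + 1) hk)
    obtain ⟨p, hp, hdeg, h0⟩ := hpoly v
    refine hns n le_rfl ((hdrive n hk.le).trans (sup_le le_rfl ?_))
    simpa [Submodule.span_le] using pow_mem_of_monic h1 hv hp hdeg h0
  · push Not at hex
    have hgrow : ∀ k ≤ n, 2 * k + 1 ≤ Module.finrank F ↥(V ^ k) := by
      intro k
      induction k with
      | zero =>
        intro _
        have : (1 : A) ∈ V ^ 0 := by rw [pow_zero]; exact Submodule.one_le.1 le_rfl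
        have hnt : Nontrivial ↥(V ^ 0) :=
          ⟨⟨⟨1, this⟩, 0, fun h => one_ne_zero (congrArg Subtype.val h)⟩⟩
        have := Module.finrank_pos (R := F) (M := ↥(V ^ 0))
        omega
      | succ k ih =>
        intro hk
        have := hex k (by omega)
        have := ih (by omega)
        omega
    have := hgrow n le_rfl
    have := Submodule.finrank_le (V ^ n)
    omega

end Chain

/-! ### A monic annihilating polynomial of degree `n + 1` -/

section Annihilator

variable (F : Type*) [Field F] (n : ℕ)

/-- The action of the dihedral group on `ZMod n`: rotations translate, and `sr i` acts by
`x ↦ -(x + i)`. -/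
def dihedralAct : DihedralGroup n → ZMod n → ZMod n
  | .r i, x => x + i
  | .sr i, x => -(x + i)

/-- The permutation representation of `DihedralGroup n` on the free vector space on `ZMod n`. -/
noncomputable def dihedralPermRep : DihedralGroup n →* Module.End F (ZMod n →₀ F) where
  toFun g := Finsupp.lmapDomain F F (dihedralAct n g)
  map_one' := by
    ext x : 2
    rw [DihedralGroup.one_def]
    simp [-DihedralGroup.r_zero, dihedralAct, Finsupp.mapDomain_single]
  map_mul' g h := by
    have : dihedralAct n (g * h) = dihedralAct n g ∘ dihedralAct n h := by
      funext x
      rcases g with i | i <;> rcases h with j | j <;> simp [dihedralAct] <;> ring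
    rw [this, Finsupp.lmapDomain_comp]
    rfl

/-- The sign character of `DihedralGroup n`, equal to `1` on rotations and `-1` on reflections. -/
def dihedralSign : DihedralGroup n →* F where
  toFun
    | .r _ => 1
    | .sr _ => -1
  map_one' := rfl
  map_mul' g h := by
    rcases g with i | i <;> rcases h with j | j <;> simp

@[simp]
lemma dihedralSign_r (i : ZMod n) : dihedralSign F n (.r i) = 1 := rfl

@[simp]
lemma dihedralSign_sr (i : ZMod n) : dihedralSign F n (.sr i) = -1 := rfl

/-- The permutation representation extended to the group algebra. -/
noncomputable def permAlg :
    MonoidAlgebra F (DihedralGroup n) →ₐ[F] Module.End F (ZMod n →₀ F) :=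
  MonoidAlgebra.lift F _ _ (dihedralPermRep F n)

/-- The sign character extended to the group algebra. -/
noncomputable def signAlg : MonoidAlgebra F (DihedralGroup n) →ₐ[F] F :=
  MonoidAlgebra.lift F _ _ (dihedralSign F n)

variable {F n}

/-- The matrix entries of the permutation representation. -/
lemma permAlg_apply [NeZero n] (y : MonoidAlgebra F (DihedralGroup n)) (j k : ZMod n) :
    permAlg F n y (Finsupp.single j 1) k =
      y.coeff (DihedralGroup.r (k - j)) + y.coeff (DihedralGroup.sr (-k - j)) := by
  induction y using MonoidAlgebra.induction_linear with
  | zero => simp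
  | add f g hf hg =>
    rw [map_add, LinearMap.add_apply, Finsupp.add_apply, hf, hg]
    simp only [MonoidAlgebra.coeff_add, Finsupp.add_apply]
    ring
  | single g c =>
    rcases g with i | i
    · have : j + i = k ↔ i = k - j := by constructor <;> rintro h <;> linear_combination h
      simp [permAlg, dihedralPermRep, dihedralAct, Finsupp.single_apply, this]
    · have : -i + -j = k ↔ i = -k - j := by constructor <;> rintro h <;> linear_combination -h
      simp [permAlg, dihedralPermRep, dihedralAct, Finsupp.single_apply, this]

/-- As `n` is odd, an element of the kernel of the permutation representation has one constant
coefficient on rotations and the opposite one on reflections. -/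
lemma coeff_of_permAlg_eq_zero [NeZero n] (hodd : Odd n) {y : MonoidAlgebra F (DihedralGroup n)}
    (hy : permAlg F n y = 0) (u v : ZMod n) :
    y.coeff (DihedralGroup.r u) + y.coeff (DihedralGroup.sr v) = 0 := by
  obtain ⟨m, hm⟩ := hodd
  -- `-m` is the inverse of `2` modulo `n = 2 * m + 1`.
  have h2 : (2 * m + 1 : ZMod n) = 0 := by
    have := ZMod.natCast_self n
    rw [hm] at this ⊢
    exact_mod_cast this
  have := permAlg_apply y (m * (u + v)) (-m * (u - v))
  rw [hy] at this
  have e1 : -(m : ZMod n) * (u - v) - m * (u + v) = u := by linear_combination (-u) * h2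
  have e2 : -(-(m : ZMod n) * (u - v)) - m * (u + v) = v := by linear_combination (-v) * h2
  rw [e1, e2] at this
  simpa using this.symm

/-- The group algebra acts on the kernel of the permutation representation by the sign
character. -/
lemma mul_of_permAlg_eq_zero [NeZero n] (hodd : Odd n) {y : MonoidAlgebra F (DihedralGroup n)}
    (hy : permAlg F n y = 0) (x : MonoidAlgebra F (DihedralGroup n)) :
    x * y = signAlg F n x • y := by
  have hc := coeff_of_permAlg_eq_zero hodd hy
  have hr : ∀ u, y.coeff (DihedralGroup.r u) = y.coeff (DihedralGroup.r 0) := fun u => by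
    linear_combination hc u 0 - hc 0 0
  have hs : ∀ u, y.coeff (DihedralGroup.sr u) = - y.coeff (DihedralGroup.r 0) := fun u => by
    linear_combination hc 0 u
  induction x using MonoidAlgebra.induction_linear with
  | zero => simp
  | add f g hf hg => rw [add_mul, hf, hg, map_add, add_smul]
  | single g c =>
    ext h
    rw [MonoidAlgebra.coeff_single_mul_apply]
    rcases g with i | i <;> rcases h with j | j <;>
      simp [signAlg, hr, hs]

lemma exists_monic_aeval_eq_zero [NeZero n] (hodd : Odd n)
    (x : MonoidAlgebra F (DihedralGroup n)) :
    ∃ p : Polynomial F, p.Monic ∧ p.natDegree = n + 1 ∧ Polynomial.aeval x p = 0 := by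
  set q := (permAlg F n x).charpoly with hq
  have hqm : q.Monic := LinearMap.charpoly_monic _
  have hlin := Polynomial.monic_X_sub_C (signAlg F n x)
  refine ⟨(Polynomial.X - Polynomial.C (signAlg F n x)) * q, hlin.mul hqm, ?_, ?_⟩
  · rw [hlin.natDegree_mul hqm, LinearMap.charpoly_natDegree, Polynomial.natDegree_X_sub_C]
    simp [add_comm]
  · have h0 : permAlg F n (Polynomial.aeval x q) = 0 := by
      rw [← Polynomial.aeval_algHom_apply, hq, LinearMap.aeval_self_charpoly]
    rw [map_mul, mul_of_permAlg_eq_zero hodd h0, map_sub, map_sub, Polynomial.aeval_X,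
      Polynomial.aeval_C, AlgHom.commutes, Algebra.algebraMap_self_apply, sub_self, zero_smul]

end Annihilator

/-! ### Two adjacent reflections -/

section Reflections

variable (F : Type*) [Field F] (n : ℕ)

/-- The two reflections `sr 0` and `sr 1` in the group algebra. -/
def reflPair : Set (MonoidAlgebra F (DihedralGroup n)) :=
  {MonoidAlgebra.of F _ (DihedralGroup.sr 0), MonoidAlgebra.of F _ (DihedralGroup.sr 1)}

/-- The closed walk around the Cayley graph of `DihedralGroup n` with respect to `sr 0` and
`sr 1`, indexed by `ℤ`: consecutive vertices differ by right multiplication by one of them. -/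
def cayleyWalk (m : ℤ) : DihedralGroup n :=
  if Even m then .r ((m / 2 : ℤ) : ZMod n) else .sr (-((m / 2 : ℤ) : ZMod n))

lemma cayleyWalk_mul (m : ℤ) :
    (cayleyWalk n m * .sr 0 = cayleyWalk n (m + 1) ∧
      cayleyWalk n m * .sr 1 = cayleyWalk n (m - 1)) ∨
    (cayleyWalk n m * .sr 0 = cayleyWalk n (m - 1) ∧
      cayleyWalk n m * .sr 1 = cayleyWalk n (m + 1)) := by
  rcases Int.even_or_odd' m with ⟨i, rfl | rfl⟩
  · left
    have h1 : (2 * i + 1) / 2 = i := by omega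
    have h2 : (2 * i - 1) / 2 = i - 1 := by omega
    have h3 : ¬ Even (2 * i - 1) := by simp
    simp [cayleyWalk, h1, h2, h3]
  · right
    have h1 : (2 * i + 1) / 2 = i := by omega
    have h2 : (2 * i + 1 + 1) / 2 = i + 1 := by omega
    have h3 : Even (2 * i + 1 + 1) := ⟨i + 1, by ring⟩
    simp [cayleyWalk, h1, h2, h3, add_comm (1 : ZMod n)]

/-- Products of at most `k` of the two reflections lie within distance `k` of the identity. -/
lemma reflPair_pow_le (k : ℕ) :
    (Submodule.span F ({1} ∪ reflPair F n)) ^ k ≤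
      Submodule.span F ((fun m : ℤ => MonoidAlgebra.of F _ (cayleyWalk n m)) ''
        (Set.Icc (-(k : ℤ)) k)) := by
  induction k with
  | zero =>
    rw [pow_zero, Submodule.one_eq_span]
    refine Submodule.span_mono ?_
    simp [cayleyWalk, MonoidAlgebra.one_def]
  | succ k ih =>
    rw [pow_succ]
    refine (mul_le_mul' ih le_rfl).trans ?_
    rw [Submodule.span_mul_span, Submodule.span_le]
    rintro _ ⟨_, ⟨m, hm, rfl⟩, y, hy, rfl⟩
    have hmem : ∀ m' : ℤ, -((k + 1 : ℕ) : ℤ) ≤ m' → m' ≤ (k + 1 : ℕ) →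
        MonoidAlgebra.of F _ (cayleyWalk n m') ∈ Submodule.span F
          ((fun m : ℤ => MonoidAlgebra.of F _ (cayleyWalk n m)) ''
            (Set.Icc (-((k + 1 : ℕ) : ℤ)) (k + 1 : ℕ))) := fun m' h h' =>
      Submodule.subset_span ⟨m', ⟨h, h'⟩, rfl⟩
    obtain ⟨hm1, hm2⟩ := hm
    simp only [SetLike.mem_coe]
    rcases hy with rfl | rfl | rfl
    · rw [mul_one]
      exact hmem m (by push_cast; omega) (by push_cast; omega)
    all_goals
      rw [← map_mul]
      rcases cayleyWalk_mul n m with ⟨h0, h1⟩ | ⟨h0, h1⟩ <;> simp only [h0, h1] <;>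
        exact hmem _ (by push_cast; omega) (by push_cast; omega)

lemma finrank_reflPair_pow_le (k : ℕ) :
    Module.finrank F ↥((Submodule.span F ({1} ∪ reflPair F n)) ^ k) ≤ 2 * k + 1 := by
  classical
  have hle := reflPair_pow_le F n k
  rw [← Finset.coe_Icc, ← Finset.coe_image] at hle
  refine (Submodule.finrank_mono hle).trans ((finrank_span_finset_le_card _).trans
    (Finset.card_image_le.trans ?_))
  rw [Int.card_Icc]
  omega

lemma adjoin_reflPair [NeZero n] : Algebra.adjoin F (reflPair F n) = ⊤ := by
  set B := Algebra.adjoin F (reflPair F n)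
  have h0 : MonoidAlgebra.of F _ (DihedralGroup.sr (0 : ZMod n)) ∈ B :=
    Algebra.subset_adjoin (Or.inl rfl)
  have h1 : MonoidAlgebra.of F _ (DihedralGroup.sr (1 : ZMod n)) ∈ B :=
    Algebra.subset_adjoin (Or.inr rfl)
  have hrot : ∀ i : ZMod n, MonoidAlgebra.of F _ (DihedralGroup.r i) ∈ B := by
    intro i
    have h := pow_mem (mul_mem h0 h1) i.val
    rw [← map_mul, ← map_pow] at h
    simpa using h
  have hall : ∀ g, MonoidAlgebra.of F (DihedralGroup n) g ∈ B := by
    rintro (i | i)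
    · exact hrot i
    · have h := mul_mem h0 (hrot i)
      rw [← map_mul] at h
      simpa using h
  rw [eq_top_iff]
  intro x _
  induction x using MonoidAlgebra.induction_on with
  | of g => exact hall g
  | add f g hf hg => exact add_mem (hf trivial) (hg trivial)
  | smul r f hf => exact B.smul_mem (hf trivial) r

end Reflections

theorem stmt_12 (F : Type*) [Field F] (n : ℕ) (hn : 3 ≤ n) (hodd : Odd n) :
    (∀ S : Set (MonoidAlgebra F (DihedralGroup n)),
        Algebra.adjoin F S = ⊤ → lenS F S ≤ n) ∧
    ∃ S : Set (MonoidAlgebra F (DihedralGroup n)),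
        Algebra.adjoin F S = ⊤ ∧ lenS F S = n := by
  have : NeZero n := ⟨by omega⟩
  have hdim : Module.finrank F (MonoidAlgebra F (DihedralGroup n)) = 2 * n := by
    rw [← DihedralGroup.card (n := n)]
    exact (MonoidAlgebra.coeffLinearEquiv F).finrank_eq.trans (Module.finrank_finsupp_self F)
  have : FiniteDimensional F (MonoidAlgebra F (DihedralGroup n)) :=
    Module.finite_of_finrank_pos (by omega)
  have hlen : ∀ S : Set (MonoidAlgebra F (DihedralGroup n)),
      Algebra.adjoin F S = ⊤ → Lk F S n = ⊤ := fun S hS =>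
    pow_eq_top_of_bounds (V := Submodule.span F ({1} ∪ S)) hS (fun x hx => Submodule.subset_span (Or.inr hx))
      (Submodule.subset_span (Or.inl rfl)) hdim.le (exists_monic_aeval_eq_zero hodd)
  have hupper : ∀ S : Set (MonoidAlgebra F (DihedralGroup n)),
      Algebra.adjoin F S = ⊤ → lenS F S ≤ n := fun S hS => Nat.sInf_le (hlen S hS)
  refine ⟨hupper, reflPair F n, adjoin_reflPair F n,
    le_antisymm (hupper _ (adjoin_reflPair F n)) ?_⟩
  have hmem : Lk F (reflPair F n) (lenS F (reflPair F n)) = ⊤ :=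
    Nat.sInf_mem (s := {k | Lk F (reflPair F n) k = ⊤}) ⟨n, hlen _ (adjoin_reflPair F n)⟩
  have hle := finrank_reflPair_pow_le F n (lenS F (reflPair F n))
  rw [Lk] at hmem
  rw [hmem, finrank_top, hdim] at hle
  omega
end
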